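/- Let f ∈ C^r(𝒪_F,E) and for h ∈ ℤ_{≥0} define f_h ∈ 𝓕^{[r]}(𝒪_F,S) by f_h(z) = Σ_{a∈A_h} 1_{a+ϖ_F^h𝒪_F}(z)·Σ_{i∈I_{≤[r]}} D_i f(a)·(z−a)^i/i!. Then: (i) there exist a constant C ∈ ℝ_{≥0} and n₀ ∈ ℤ_{≥0} such that ‖f_{h+1}−f_h‖_{𝓕_{h+1}} ≤ C·C_{f,r}(h)·q^{−rh} for all h ≥ n₀; and (ii) f_h converges to f in C^r(𝒪_F,E) as h → ∞. -/

import Mathlib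

/-!
Setting (cf. the paper's notations): `O` plays the role of the ring of integers `𝒪_F` of a
finite extension `F` of `ℚ_p`, `E` is the coefficient field (a finite extension of `ℚ_p`
with its p-adic absolute value, normalized by `|x| = p^{-val_F(x)}`, `val_F(p) = [F:ℚ_p]`),
`S` is the (finite) set of `ℚ_p`-algebra embeddings `F ↪ E`, restricted here to `O`,
`ν : O → ℝ` is the absolute value on `O` (the common restriction of the norm of `E` along any
embedding), `ϖ` is a fixed uniformizer with `ν ϖ = q⁻¹` where `q = p^f` is the cardinality
of the residue field, and `u * ϖ ^ e = p` records the ramification index `e`.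
-/

open scoped Classical

noncomputable section

namespace CrPaper

structure Setting (S O E : Type*) [Fintype S] [CommRing O] [NormedField E] where
  q : ℝ
  p : ℕ
  fdeg : ℕ
  hp : p.Prime
  hfdeg : 0 < fdeg
  hq : q = (p : ℝ) ^ fdeg
  emb : S → O →+* E
  emb_inj : ∀ s, Function.Injective (emb s)
  emb_distinct : Function.Injective emb
  ν : O → ℝ
  norm_emb : ∀ (s) (z : O), ‖emb s z‖ = ν z
  norm_le_one : ∀ (s) (z : O), ‖emb s z‖ ≤ 1
  norm_add_max : ∀ x y : E, ‖x + y‖ ≤ max ‖x‖ ‖y‖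
  ϖ : O
  ν_ϖ : ν ϖ = q⁻¹
  mem_ball_iff : ∀ (y : O) (n : ℕ), (∃ z, y = ϖ ^ n * z) ↔ ν y ≤ q⁻¹ ^ n
  ram : ∃ (e : ℕ) (u : O), 0 < e ∧ IsUnit u ∧ u * ϖ ^ e = (p : O)

variable {S O E : Type*} [Fintype S] [DecidableEq S] [CommRing O] [IsDomain O]
  [NormedField E] [CompleteSpace E] [CharZero E]

/-- The total weight `|i| = ∑ i_σ` of a multi-index. -/
def wt (i : S → ℕ) : ℕ := ∑ s, i s

/-- `i! = ∏ i_σ!` for a multi-index. -/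
def mfact (i : S → ℕ) : ℕ := ∏ s, (i s).factorial

/-- The (finite) set `I_{≤N}` of multi-indices of total weight `≤ N`. -/
def Idx (S : Type*) [Fintype S] [DecidableEq S] (N : ℕ) : Finset (S → ℕ) :=
  (Fintype.piFinset fun _ : S => Finset.range (N + 1)).filter fun i => wt i ≤ N

/-- `z^i = ∏_σ σ(z)^{i_σ}`. -/
def mpow (St : Setting S O E) (z : O) (i : S → ℕ) : E := ∏ s, St.emb s z ^ i s

/-- The Taylor remainder `ε_{f,N}(x,y) = f(x+y) − ∑_{|i|≤N} D_i f(x) y^i / i!`. -/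
def epsTay (St : Setting S O E) (N : ℕ) (f : O → E) (D : (S → ℕ) → O → E) (x y : O) : E :=
  f (x + y) - ∑ i ∈ Idx S N, D i x * mpow St y i / (mfact i : E)

/-- `f` is of class `C^r` with the family of bounded functions `D` witnessing the
definition: all `D_i` (`|i| ≤ ⌊r⌋`) are bounded and
`C_{f,r}(h) = sup_{x ∈ O, y ∈ ϖ^h O} |ε_{f,⌊r⌋}(x,y)| q^{rh} → 0` as `h → ∞`. -/
def IsCrWith (St : Setting S O E) (r : ℝ) (f : O → E) (D : (S → ℕ) → O → E) : Prop :=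
  (∀ i ∈ Idx S ⌊r⌋₊, ∃ C : ℝ, ∀ x : O, ‖D i x‖ ≤ C) ∧
  ∀ ε : ℝ, 0 < ε → ∃ M : ℕ, ∀ h : ℕ, M ≤ h → ∀ x z : O,
    ‖epsTay St ⌊r⌋₊ f D x (St.ϖ ^ h * z)‖ * St.q ^ (r * (h : ℝ)) ≤ ε

/-- `f` is of class `C^r`. -/
def IsCr (St : Setting S O E) (r : ℝ) (f : O → E) : Prop :=
  ∃ D, IsCrWith St r f D

/-- The `C^r`-norm of `f` (relative to the — unique — family `D`):
`max( sup_{i,x} |D_i f(x)/i!| , sup_{x,y} |ε_{f,⌊r⌋}(x,y)|/|y|^r )`. -/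
def CrNorm (St : Setting S O E) (r : ℝ) (f : O → E) (D : (S → ℕ) → O → E) : ℝ :=
  max (⨆ i : (Idx S ⌊r⌋₊), ⨆ x : O, ‖D i.1 x / (mfact i.1 : E)‖)
      (⨆ x : O, ⨆ y : O, ‖epsTay St ⌊r⌋₊ f D x y‖ / St.ν y ^ r)

/-- A compatible system of representatives `A_h` of `O/ϖ^h O` with `A_0 = {0}` and
`A_h ⊆ A_{h+1}`. -/
structure RepSystem (St : Setting S O E) where
  A : ℕ → Finset O
  hA0 : A 0 = {0}
  hmono : ∀ h : ℕ, A h ⊆ A (h + 1)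
  hrep : ∀ (h : ℕ) (z : O), ∃! a : O, a ∈ A h ∧ ∃ y : O, z = a + St.ϖ ^ h * y

/-- `A = ⋃_h A_h`. -/
def Aall (St : Setting S O E) (R : RepSystem St) : Set O := ⋃ h : ℕ, (R.A h : Set O)

/-- `l(a)`: the smallest `n` with `a ∈ A_n`. -/
def lA (St : Setting S O E) (R : RepSystem St) (a : O) : ℕ := sInf {n : ℕ | a ∈ R.A n}

/-- The characteristic function of `a + ϖ^n O`, with values in `E`. -/
def indC (St : Setting S O E) (a : O) (n : ℕ) : O → E := fun z =>
  if ∃ y : O, z = a + St.ϖ ^ n * y then 1 else 0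

/-- The approximation `f_h(z) = ∑_{a ∈ A_h} 1_{a+ϖ^h O}(z) ∑_{|i|≤[r]} D_i f(a) (z−a)^i/i!`. -/
def fApprox (St : Setting S O E) (R : RepSystem St) (r : ℝ)
    (D : (S → ℕ) → O → E) (h : ℕ) : O → E := fun z =>
  ∑ a ∈ R.A h, indC St a h z * ∑ i ∈ Idx S ⌊r⌋₊, D i a * mpow St (z - a) i / (mfact i : E)

/-- `C_{f,r}(h) = sup_{x ∈ O, y ∈ ϖ^h O} |ε_{f,[r]}(x,y)| q^{rh}`. -/
def CfrSup (St : Setting S O E) (r : ℝ) (f : O → E) (D : (S → ℕ) → O → E) (h : ℕ) : ℝ :=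
  ⨆ x : O, ⨆ z : O, ‖epsTay St ⌊r⌋₊ f D x (St.ϖ ^ h * z)‖ * St.q ^ (r * (h : ℝ))

section Helpers

lemma one_lt_q (St : Setting S O E) : 1 < St.q := by
  rw [St.hq]
  exact one_lt_pow₀ (by exact_mod_cast St.hp.one_lt) St.hfdeg.ne'

lemma q_pos (St : Setting S O E) : 0 < St.q := lt_trans one_pos (one_lt_q St)

lemma mfact_ne (i : S → ℕ) : (mfact i : E) ≠ 0 := by
  unfold mfact
  exact_mod_cast (Finset.prod_ne_zero_iff.mpr fun s _ => Nat.factorial_ne_zero _)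

lemma wt_le_of_mem {N : ℕ} {i : S → ℕ} (hi : i ∈ Idx S N) : wt i ≤ N := by
  unfold Idx at hi
  exact (Finset.mem_filter.mp hi).2

lemma mpow_mul (St : Setting S O E) (y z : O) (i : S → ℕ) :
    mpow St (y * z) i = mpow St y i * mpow St z i := by
  simp [mpow, mul_pow, Finset.prod_mul_distrib]

lemma norm_mpow_unif (St : Setting S O E) (h : ℕ) (i : S → ℕ) :
    ‖mpow St (St.ϖ ^ h) i‖ = St.q ^ (-((h : ℝ) * (wt i : ℝ))) := by
  have h1 : ‖mpow St (St.ϖ ^ h) i‖ = ∏ s, (St.q⁻¹ ^ h) ^ i s := by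
    rw [mpow, norm_prod]
    refine Finset.prod_congr rfl fun s _ => ?_
    rw [norm_pow, map_pow, norm_pow, St.norm_emb, St.ν_ϖ]
  rw [h1, Finset.prod_pow_eq_pow_sum, Real.rpow_neg (q_pos St).le]
  change (St.q⁻¹ ^ h) ^ (wt i) = _
  rw [← pow_mul, inv_pow, ← Real.rpow_natCast]
  push_cast
  rfl

lemma norm_mpow_le_one (St : Setting S O E) (y : O) (i : S → ℕ) : ‖mpow St y i‖ ≤ 1 := by
  rw [mpow, norm_prod]
  refine Finset.prod_le_one (fun _ _ => norm_nonneg _) fun s _ => ?_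
  rw [norm_pow]
  exact pow_le_one₀ (norm_nonneg _) (St.norm_le_one s y)

lemma norm_mpow_le (St : Setting S O E) (h : ℕ) (y : O) (i : S → ℕ) :
    ‖mpow St (St.ϖ ^ h * y) i‖ ≤ St.q ^ (-((h : ℝ) * (wt i : ℝ))) := by
  rw [mpow_mul, norm_mul, norm_mpow_unif]
  exact mul_le_of_le_one_right (Real.rpow_nonneg (q_pos St).le _) (norm_mpow_le_one St y i)

/-- `z ↦ z^i` as a monoid homomorphism. -/
def chi (St : Setting S O E) (i : S → ℕ) : O →* E where
  toFun z := mpow St z i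
  map_one' := by simp [mpow]
  map_mul' y z := mpow_mul St y z i

lemma chi_inj (St : Setting S O E) : Function.Injective (chi St) := by
  intro i j hij
  have hz : ∀ z : O, ∑ s, (i s : E) * St.emb s z = ∑ s, (j s : E) * St.emb s z := by
    intro z
    have hP : (∏ s, (Polynomial.X + Polynomial.C (St.emb s z)) ^ i s) =
        ∏ s, (Polynomial.X + Polynomial.C (St.emb s z)) ^ j s := by
      apply Polynomial.eq_of_infinite_eval_eq
      refine Set.Infinite.mono ?_ (Set.infinite_range_of_injective (Nat.cast_injective (R := E)))
      rintro _ ⟨n, rfl⟩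
      have := DFunLike.congr_fun hij ((n : O) + z)
      simp only [chi, MonoidHom.coe_mk, OneHom.coe_mk, mpow, map_add, map_natCast] at this
      simpa [Polynomial.eval_prod] using this
    have hroots : ∀ k : S → ℕ,
        (∏ s, (Polynomial.X + Polynomial.C (St.emb s z)) ^ k s).roots.sum
          = - ∑ s, (k s : E) * St.emb s z := by
      intro k
      rw [Polynomial.roots_prod]
      · simp only [Polynomial.roots_pow, Polynomial.roots_X_add_C]
        rw [Multiset.sum_bind]
        simp only [Multiset.sum_nsmul, Multiset.sum_singleton, smul_neg, nsmul_eq_mul]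
        rw [← Finset.sum_neg_distrib]
        rfl
      · exact Finset.prod_ne_zero_iff.mpr fun s _ =>
          pow_ne_zero _ (Polynomial.X_add_C_ne_zero _)
    have := hroots i
    rw [hP, hroots j] at this
    exact (neg_injective this).symm
  have hli : LinearIndependent E (fun s : S => ((St.emb s : O →* E) : O → E)) := by
    refine (linearIndependent_monoidHom O E).comp (fun s : S => (St.emb s : O →* E)) ?_
    intro s t hst
    apply St.emb_distinct
    ext x
    exact DFunLike.congr_fun hst x
  have h0 := Fintype.linearIndependent_iff.mp hli (fun s => (i s : E) - j s) (by
    ext z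
    simp only [Finset.sum_apply, Pi.smul_apply, smul_eq_mul, Pi.zero_apply, sub_mul,
      Finset.sum_sub_distrib]
    exact sub_eq_zero.mpr (hz z))
  ext s
  exact_mod_cast sub_eq_zero.mp (h0 s)

/-- Dual functionals: each coefficient is a finite combination of values. -/
lemma exists_dual (St : Setting S O E) (N : ℕ) (k : Idx S N) :
    ∃ l : O →₀ E, ∀ i : Idx S N,
      (l.sum fun y c => c * mpow St y i.1) = if i = k then 1 else 0 := by
  let v : O → (Idx S N → E) := fun y i => mpow St y i.1
  have htop : Submodule.span E (Set.range v) = ⊤ := by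
    by_contra hne
    obtain ⟨g, hg0, hg⟩ := Submodule.exists_le_ker_of_lt_top _ (lt_top_iff_ne_top.mpr hne)
    have hli : LinearIndependent E (fun i : Idx S N => (chi St i.1 : O → E)) :=
      (linearIndependent_monoidHom O E).comp (fun i : Idx S N => chi St i.1)
        (fun a b hab => Subtype.ext (chi_inj St hab))
    have hexp : ∀ w : Idx S N → E, g w = ∑ i, w i * g (Pi.single i 1) := by
      intro w
      conv_lhs => rw [pi_eq_sum_univ' w]
      simp [map_sum]
    have h0 := Fintype.linearIndependent_iff.mp hli (fun i => g (Pi.single i 1)) (by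
      ext y
      have : g (v y) = 0 := hg (Submodule.subset_span ⟨y, rfl⟩)
      rw [hexp] at this
      simp only [Finset.sum_apply, Pi.smul_apply, smul_eq_mul, Pi.zero_apply]
      rw [← this]
      exact Finset.sum_congr rfl fun i _ => mul_comm _ _)
    apply hg0
    refine LinearMap.ext fun w => ?_
    rw [hexp]
    simp [h0]
  have hk : (Pi.single k 1 : Idx S N → E) ∈ Submodule.span E (Set.range v) := by
    rw [htop]; trivial
  obtain ⟨l, hl⟩ := Finsupp.mem_span_range_iff_exists_finsupp.mp hk
  refine ⟨l, fun i => ?_⟩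
  have := congrFun hl i
  simp only [Finsupp.sum, Finset.sum_apply, Pi.smul_apply, smul_eq_mul, v] at this
  rw [Finsupp.sum, this, Pi.single_apply]

lemma key (St : Setting S O E) (N : ℕ) :
    ∃ K : ℝ, 0 ≤ K ∧ ∀ (h : ℕ) (B : ℝ) (d : (S → ℕ) → E),
      (∀ y : O, ‖∑ i ∈ Idx S N, d i * mpow St (St.ϖ ^ h * y) i‖ ≤ B) →
      ∀ i ∈ Idx S N, ‖d i‖ * St.q ^ (-((h : ℝ) * (wt i : ℝ))) ≤ K * B := by
  choose l hl using exists_dual St N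
  refine ⟨∑ k, ∑ y ∈ (l k).support, ‖l k y‖,
    Finset.sum_nonneg fun _ _ => Finset.sum_nonneg fun _ _ => norm_nonneg _, ?_⟩
  intro h B d hd i hi
  have hB : 0 ≤ B := (norm_nonneg _).trans (hd 0)
  have e1 : d i * mpow St (St.ϖ ^ h) i =
      ∑ y ∈ (l ⟨i, hi⟩).support, l ⟨i, hi⟩ y *
        ∑ j ∈ Idx S N, d j * mpow St (St.ϖ ^ h * y) j := by
    simp_rw [Finset.mul_sum]
    rw [Finset.sum_comm, Finset.sum_eq_single i]
    · have := hl ⟨i, hi⟩ ⟨i, hi⟩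
      simp only [if_true, Finsupp.sum] at this
      calc _ = d i * mpow St (St.ϖ ^ h) i * 1 := by ring
        _ = _ := by
          rw [← this, Finset.mul_sum]
          refine Finset.sum_congr rfl fun y _ => ?_
          rw [mpow_mul]; ring
    · intro j hj hji
      have := hl ⟨i, hi⟩ ⟨j, hj⟩
      rw [if_neg (by simpa using hji)] at this
      simp only [Finsupp.sum] at this
      calc _ = d j * mpow St (St.ϖ ^ h) j *
          ∑ y ∈ (l ⟨i, hi⟩).support, l ⟨i, hi⟩ y * mpow St y j := by
            rw [Finset.mul_sum]
            refine Finset.sum_congr rfl fun y _ => ?_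
            rw [mpow_mul]; ring
        _ = 0 := by rw [this, mul_zero]
    · intro hn; exact absurd hi hn
  rw [← norm_mpow_unif, ← norm_mul, e1]
  calc _ ≤ ∑ y ∈ (l ⟨i, hi⟩).support, ‖l ⟨i, hi⟩ y‖ * B := by
        refine norm_sum_le_of_le _ fun y _ => ?_
        rw [norm_mul]
        exact mul_le_mul_of_nonneg_left (hd y) (norm_nonneg _)
    _ = (∑ y ∈ (l ⟨i, hi⟩).support, ‖l ⟨i, hi⟩ y‖) * B := by rw [Finset.sum_mul]
    _ ≤ _ := by
        refine mul_le_mul_of_nonneg_right ?_ hB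
        exact Finset.single_le_sum (f := fun k => ∑ y ∈ (l k).support, ‖l k y‖)
          (fun _ _ => Finset.sum_nonneg fun _ _ => norm_nonneg _) (Finset.mem_univ _)

lemma shift_mono (St : Setting S O E) (N : ℕ) (w : O) (j : S → ℕ) (hj : wt j ≤ N) :
    ∃ e : (S → ℕ) → E, ∀ y : O, mpow St (w + y) j = ∑ i ∈ Idx S N, e i * mpow St y i := by
  refine ⟨fun i => ∏ s, (St.emb s w ^ (j s - i s) * ((j s).choose (i s) : E)), fun y => ?_⟩
  have hjs : ∀ s, j s ≤ N := fun s =>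
    (Finset.single_le_sum (f := j) (fun _ _ => Nat.zero_le _) (Finset.mem_univ s)).trans hj
  have h1 : ∀ s, (St.emb s (w + y)) ^ j s =
      ∑ m ∈ Finset.range (N + 1),
        (St.emb s w ^ (j s - m) * ((j s).choose m : E)) * St.emb s y ^ m := by
    intro s
    rw [map_add, add_comm, add_pow]
    refine (Finset.sum_subset (Finset.range_mono (Nat.succ_le_succ (hjs s))) ?_).trans ?_
    · intro m _ hm
      rw [Nat.choose_eq_zero_of_lt (by simpa [Nat.lt_succ_iff] using hm)]
      simp
    · exact Finset.sum_congr rfl fun m _ => by ring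
  rw [mpow, Finset.prod_congr rfl fun s _ => h1 s, Finset.prod_univ_sum, Idx, Finset.sum_filter]
  refine Finset.sum_congr rfl fun i _ => ?_
  rw [Finset.prod_mul_distrib]
  split_ifs with hw
  · rfl
  · have : ∃ s, j s < i s := by
      by_contra hc
      push Not at hc
      exact hw ((Finset.sum_le_sum fun s _ => hc s).trans hj)
    obtain ⟨s, hs⟩ := this
    rw [Finset.prod_eq_zero (Finset.mem_univ s), zero_mul]
    rw [Nat.choose_eq_zero_of_lt hs]; simp

lemma shift_poly (St : Setting S O E) (N : ℕ) (w : O) (b : (S → ℕ) → E) :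
    ∃ e : (S → ℕ) → E, ∀ y : O, ∑ j ∈ Idx S N, b j * mpow St (w + y) j =
      ∑ i ∈ Idx S N, e i * mpow St y i := by
  have : ∀ j : S → ℕ, ∃ e : (S → ℕ) → E, j ∈ Idx S N →
      ∀ y : O, mpow St (w + y) j = ∑ i ∈ Idx S N, e i * mpow St y i := by
    intro j
    by_cases hj : j ∈ Idx S N
    · obtain ⟨e, he⟩ := shift_mono St N w j (wt_le_of_mem hj)
      exact ⟨e, fun _ => he⟩
    · exact ⟨0, fun h => absurd h hj⟩
  choose e he using this
  refine ⟨fun i => ∑ j ∈ Idx S N, b j * e j i, fun y => ?_⟩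
  rw [Finset.sum_congr rfl fun j hj => by rw [he j hj y, Finset.mul_sum], Finset.sum_comm]
  refine Finset.sum_congr rfl fun i _ => ?_
  rw [Finset.sum_mul]
  exact Finset.sum_congr rfl fun j _ => by ring

lemma fApprox_eq (St : Setting S O E) (R : RepSystem St) (r : ℝ)
    (D : (S → ℕ) → O → E) (h : ℕ) (a z : O) (ha : a ∈ R.A h) (hz : ∃ y, z = a + St.ϖ ^ h * y) :
    fApprox St R r D h z = ∑ i ∈ Idx S ⌊r⌋₊, D i a * mpow St (z - a) i / (mfact i : E) := by
  unfold fApprox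
  rw [Finset.sum_eq_single a]
  · rw [indC, if_pos hz, one_mul]
  · intro b hb hba
    rw [indC, if_neg, zero_mul]
    intro hzb
    exact hba ((R.hrep h z).unique ⟨hb, hzb⟩ ⟨ha, hz⟩)
  · intro hn; exact absurd ha hn

lemma sub_fApprox (St : Setting S O E) (R : RepSystem St) (r : ℝ) (f : O → E)
    (D : (S → ℕ) → O → E) (h : ℕ) (z : O) :
    ∃ a y : O, f z - fApprox St R r D h z = epsTay St ⌊r⌋₊ f D a (St.ϖ ^ h * y) := by
  obtain ⟨a, ⟨ha, y, hy⟩, -⟩ := R.hrep h z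
  refine ⟨a, y, ?_⟩
  rw [fApprox_eq St R r D h a z ha ⟨y, hy⟩, epsTay, ← hy, show z - a = St.ϖ ^ h * y by
    rw [hy]; ring]

lemma local_poly (St : Setting S O E) (R : RepSystem St) (r : ℝ)
    (D : (S → ℕ) → O → E) (h : ℕ) (x : O) :
    ∃ e : (S → ℕ) → E, ∀ y : O, fApprox St R r D h (x + St.ϖ ^ h * y) =
      ∑ i ∈ Idx S ⌊r⌋₊, e i * mpow St (St.ϖ ^ h * y) i := by
  obtain ⟨a, ⟨ha, z, hz⟩, -⟩ := R.hrep h x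
  obtain ⟨e, he⟩ := shift_poly St ⌊r⌋₊ (x - a) (fun j => D j a / (mfact j : E))
  refine ⟨e, fun y => ?_⟩
  rw [fApprox_eq St R r D h a _ ha ⟨z + y, by rw [hz]; ring⟩, ← he]
  refine Finset.sum_congr rfl fun i _ => ?_
  rw [show x + St.ϖ ^ h * y - a = x - a + St.ϖ ^ h * y by ring]
  ring

end Helpers

/-- (i) there are `C ≥ 0` and `n₀` such that for `h ≥ n₀`, the coefficients `c`
of `f_{h+1} − f_h` on the cosets of `ϖ^{h+1} O` satisfy
`‖f_{h+1}−f_h‖_{𝓕_{h+1}} ≤ C · C_{f,r}(h) · q^{−rh}`; (ii) `f_h → f` in `C^r(O,E)`. -/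
theorem statement13 (St : Setting S O E) (R : RepSystem St) (r : ℝ) (hr : 0 ≤ r)
    (f : O → E) (D : (S → ℕ) → O → E) (hf : IsCrWith St r f D) :
    (∃ C : ℝ, 0 ≤ C ∧ ∃ n₀ : ℕ, ∀ h : ℕ, n₀ ≤ h →
      ∀ c : O → (S → ℕ) → E,
        (∀ a y : O,
          fApprox St R r D (h + 1) (a + St.ϖ ^ (h + 1) * y) -
              fApprox St R r D h (a + St.ϖ ^ (h + 1) * y) =
            ∑ i ∈ Idx S ⌊r⌋₊, c a i * mpow St (St.ϖ ^ (h + 1) * y) i) →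
        ∀ a : O, ∀ i ∈ Idx S ⌊r⌋₊,
          ‖c a i‖ * St.q ^ (-(((h : ℝ) + 1) * (wt i : ℝ))) ≤
            C * CfrSup St r f D h * St.q ^ (-(r * (h : ℝ)))) ∧
    (∀ ε : ℝ, 0 < ε → ∃ M : ℕ, ∀ h : ℕ, M ≤ h →
      ∃ D' : (S → ℕ) → O → E,
        IsCrWith St r (fun z => f z - fApprox St R r D h z) D' ∧
        CrNorm St r (fun z => f z - fApprox St R r D h z) D' ≤ ε) := by
  obtain ⟨K, hK0, hK⟩ := key St ⌊r⌋₊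
  have hq := q_pos St
  have hq1 := one_lt_q St
  obtain ⟨hbd, hlim⟩ := hf
  have hqq : ∀ t : ℝ, St.q ^ (-t) * St.q ^ t = 1 := fun t => by
    rw [← Real.rpow_add hq]; simp
  constructor
  · obtain ⟨M, hM⟩ := hlim 1 one_pos
    refine ⟨K * 2, by positivity, M, fun h hh c hc a i hi => ?_⟩
    have hle : ∀ x z : O, ‖epsTay St ⌊r⌋₊ f D x (St.ϖ ^ h * z)‖ ≤
        CfrSup St r f D h * St.q ^ (-(r * (h : ℝ))) := by
      intro x z
      have h1 : ‖epsTay St ⌊r⌋₊ f D x (St.ϖ ^ h * z)‖ * St.q ^ (r * (h : ℝ)) ≤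
          CfrSup St r f D h := by
        refine le_trans ?_ (le_ciSup (f := fun x : O => ⨆ z : O,
          ‖epsTay St ⌊r⌋₊ f D x (St.ϖ ^ h * z)‖ * St.q ^ (r * (h : ℝ))) ?_ x)
        · exact le_ciSup (f := fun z : O =>
            ‖epsTay St ⌊r⌋₊ f D x (St.ϖ ^ h * z)‖ * St.q ^ (r * (h : ℝ)))
            ⟨1, by rintro _ ⟨z, rfl⟩; exact hM h hh x z⟩ z
        · exact ⟨1, by rintro _ ⟨z, rfl⟩; exact ciSup_le fun w => hM h hh z w⟩
      calc _ = ‖epsTay St ⌊r⌋₊ f D x (St.ϖ ^ h * z)‖ *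
            (St.q ^ (-(r * (h : ℝ))) * St.q ^ (r * (h : ℝ))) := by rw [hqq, mul_one]
        _ = ‖epsTay St ⌊r⌋₊ f D x (St.ϖ ^ h * z)‖ * St.q ^ (r * (h : ℝ)) *
            St.q ^ (-(r * (h : ℝ))) := by ring
        _ ≤ _ := mul_le_mul_of_nonneg_right h1 (Real.rpow_nonneg hq.le _)
    have := hK (h + 1) (2 * (CfrSup St r f D h * St.q ^ (-(r * (h : ℝ))))) (c a) (by
      intro y
      rw [← hc a y]
      obtain ⟨b, z, hbz⟩ := sub_fApprox St R r f D h (a + St.ϖ ^ (h + 1) * y)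
      obtain ⟨b', z', hbz'⟩ := sub_fApprox St R r f D (h + 1) (a + St.ϖ ^ (h + 1) * y)
      rw [show fApprox St R r D (h + 1) (a + St.ϖ ^ (h + 1) * y) -
              fApprox St R r D h (a + St.ϖ ^ (h + 1) * y) =
          (f (a + St.ϖ ^ (h + 1) * y) - fApprox St R r D h (a + St.ϖ ^ (h + 1) * y)) -
          (f (a + St.ϖ ^ (h + 1) * y) - fApprox St R r D (h + 1) (a + St.ϖ ^ (h + 1) * y)) by
            ring, hbz, hbz', pow_succ, mul_assoc (St.ϖ ^ h)]
      refine (norm_sub_le _ _).trans ?_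
      linarith [hle b z, hle b' (St.ϖ * z')]) i hi
    push_cast at this
    linarith
  · intro ε hε
    set n : ℝ := ((Idx S ⌊r⌋₊).card : ℝ) with hn
    have hn0 : 0 ≤ n := Nat.cast_nonneg _
    set L : ℝ := 1 + 2 * K + n * (2 * K) with hL
    have hL1 : 1 ≤ L := by nlinarith [mul_nonneg hn0 hK0]
    have hqr : 1 ≤ St.q ^ r := Real.one_le_rpow hq1.le hr
    set δ : ℝ := ε / (L * St.q ^ r) with hδ
    have hδ0 : 0 < δ := by positivity
    have hLδ : L * δ * St.q ^ r = ε := by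
      rw [hδ]; field_simp
    obtain ⟨M, hM⟩ := hlim δ hδ0
    have hle : ∀ h, M ≤ h → ∀ x z : O, ‖epsTay St ⌊r⌋₊ f D x (St.ϖ ^ h * z)‖ ≤
        δ * St.q ^ (-(r * (h : ℝ))) := by
      intro h hh x z
      calc _ = ‖epsTay St ⌊r⌋₊ f D x (St.ϖ ^ h * z)‖ *
            (St.q ^ (-(r * (h : ℝ))) * St.q ^ (r * (h : ℝ))) := by rw [hqq, mul_one]
        _ = ‖epsTay St ⌊r⌋₊ f D x (St.ϖ ^ h * z)‖ * St.q ^ (r * (h : ℝ)) *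
            St.q ^ (-(r * (h : ℝ))) := by ring
        _ ≤ _ := mul_le_mul_of_nonneg_right (hM h hh x z) (Real.rpow_nonneg hq.le _)
    refine ⟨M, fun h hh => ?_⟩
    choose e he using local_poly St R r D h
    let g : O → E := fun z => f z - fApprox St R r D h z
    let D' : (S → ℕ) → O → E := fun i x => D i x - (mfact i : E) * e x i
    have hdiv : ∀ i x, D' i x / (mfact i : E) = D i x / (mfact i : E) - e x i := by
      intro i x
      have := mfact_ne (E := E) i
      simp only [D']
      field_simp
    have hg : ∀ z, ‖g z‖ ≤ δ * St.q ^ (-(r * (h : ℝ))) := by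
      intro z
      obtain ⟨a, y, hay⟩ := sub_fApprox St R r f D h z
      simp only [g]
      rw [hay]
      exact hle h hh a y
    have heps : ∀ x y, epsTay St ⌊r⌋₊ g D' x (St.ϖ ^ h * y) =
        epsTay St ⌊r⌋₊ f D x (St.ϖ ^ h * y) := by
      intro x y
      simp only [epsTay, g]
      rw [he x y]
      have : ∑ i ∈ Idx S ⌊r⌋₊, D' i x * mpow St (St.ϖ ^ h * y) i / (mfact i : E) =
          ∑ i ∈ Idx S ⌊r⌋₊, D i x * mpow St (St.ϖ ^ h * y) i / (mfact i : E) -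
          ∑ i ∈ Idx S ⌊r⌋₊, e x i * mpow St (St.ϖ ^ h * y) i := by
        rw [← Finset.sum_sub_distrib]
        refine Finset.sum_congr rfl fun i _ => ?_
        rw [mul_div_right_comm, hdiv]; ring
      rw [this]; ring
    have heps' : ∀ m, h ≤ m → ∀ x y, epsTay St ⌊r⌋₊ g D' x (St.ϖ ^ m * y) =
        epsTay St ⌊r⌋₊ f D x (St.ϖ ^ m * y) := by
      intro m hm x y
      obtain ⟨k, rfl⟩ := Nat.exists_eq_add_of_le hm
      rw [pow_add, mul_assoc]
      exact heps x _
    have hD1 : ∀ x, ∀ i ∈ Idx S ⌊r⌋₊,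
        ‖D' i x / (mfact i : E)‖ * St.q ^ (-((h : ℝ) * (wt i : ℝ))) ≤
          2 * K * δ * St.q ^ (-(r * (h : ℝ))) := by
      intro x i hi
      have := hK h (2 * (δ * St.q ^ (-(r * (h : ℝ))))) (fun i => D' i x / (mfact i : E)) (by
        intro y
        have h1 : ∑ i ∈ Idx S ⌊r⌋₊, D' i x / (mfact i : E) * mpow St (St.ϖ ^ h * y) i =
            g (x + St.ϖ ^ h * y) - epsTay St ⌊r⌋₊ g D' x (St.ϖ ^ h * y) := by
          rw [epsTay, sub_sub_cancel]
          exact Finset.sum_congr rfl fun i _ => by ring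
        rw [h1, heps]
        refine (norm_sub_le _ _).trans ?_
        linarith [hg (x + St.ϖ ^ h * y), hle h hh x y]) i hi
      linarith
    have hwr : ∀ i ∈ Idx S ⌊r⌋₊, (wt i : ℝ) ≤ r := fun i hi =>
      (Nat.cast_le.mpr (wt_le_of_mem hi)).trans (Nat.floor_le hr)
    -- main derivative estimate at scale `m ≤ h`
    have hD2 : ∀ m : ℕ, m ≤ h → ∀ x, ∀ i ∈ Idx S ⌊r⌋₊,
        ‖D' i x / (mfact i : E)‖ * St.q ^ (-((m : ℝ) * (wt i : ℝ))) ≤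
          2 * K * δ * St.q ^ (-(r * (m : ℝ))) := by
      intro m hm x i hi
      have hm' : (m : ℝ) ≤ h := by exact_mod_cast hm
      have h1 := mul_le_mul_of_nonneg_right (hD1 x i hi)
        (Real.rpow_nonneg hq.le (((h : ℝ) - m) * (wt i : ℝ)))
      rw [mul_assoc, mul_assoc (2 * K * δ), ← Real.rpow_add hq, ← Real.rpow_add hq] at h1
      rw [show -((h : ℝ) * (wt i : ℝ)) + ((h : ℝ) - m) * (wt i : ℝ) = -((m : ℝ) * (wt i : ℝ)) by
        ring] at h1
      refine h1.trans (mul_le_mul_of_nonneg_left ?_ (by positivity))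
      refine Real.rpow_le_rpow_of_exponent_le hq1.le ?_
      nlinarith [mul_nonneg (sub_nonneg.mpr hm') (sub_nonneg.mpr (hwr i hi))]
    have hD3 : ∀ x, ∀ i ∈ Idx S ⌊r⌋₊, ‖D' i x / (mfact i : E)‖ ≤ 2 * K * δ := by
      intro x i hi
      simpa using hD2 0 (Nat.zero_le _) x i hi
    have hCr : IsCrWith St r g D' := by
      refine ⟨fun i hi => ⟨2 * K * δ * ‖(mfact i : E)‖, fun x => ?_⟩, fun η hη => ?_⟩
      · have h1 := hD3 x i hi
        rwa [norm_div, div_le_iff₀ (norm_pos_iff.mpr (mfact_ne i))] at h1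
      · obtain ⟨M', hM'⟩ := hlim η hη
        refine ⟨max M' h, fun m hm x z => ?_⟩
        rw [heps' m (le_of_max_le_right hm)]
        exact hM' m (le_of_max_le_left hm) x z
    have hE : ∀ (m : ℕ) (x y : O), ‖epsTay St ⌊r⌋₊ g D' x (St.ϖ ^ m * y)‖ ≤
        L * δ * St.q ^ (-(r * (m : ℝ))) := by
      intro m x y
      have hQ : 0 ≤ St.q ^ (-(r * (m : ℝ))) := Real.rpow_nonneg hq.le _
      rcases le_total h m with hm | hm
      · rw [heps' m hm]
        refine (hle m (hh.trans hm) x y).trans (mul_le_mul_of_nonneg_right ?_ hQ)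
        nlinarith
      · have hm' : (m : ℝ) ≤ h := by exact_mod_cast hm
        have h1 : ‖g (x + St.ϖ ^ m * y)‖ ≤ δ * St.q ^ (-(r * (m : ℝ))) := by
          refine (hg _).trans (mul_le_mul_of_nonneg_left ?_ hδ0.le)
          refine Real.rpow_le_rpow_of_exponent_le hq1.le ?_
          nlinarith [mul_le_mul_of_nonneg_left hm' hr]
        have h2 : ‖∑ i ∈ Idx S ⌊r⌋₊, D' i x * mpow St (St.ϖ ^ m * y) i / (mfact i : E)‖ ≤
            n * (2 * K * δ * St.q ^ (-(r * (m : ℝ)))) := by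
          rw [hn, ← nsmul_eq_mul]
          refine (norm_sum_le _ _).trans (Finset.sum_le_card_nsmul _ _ _ fun i hi => ?_)
          rw [mul_div_right_comm, norm_mul]
          exact (mul_le_mul_of_nonneg_left (norm_mpow_le St m y i) (norm_nonneg _)).trans
            (hD2 m hm x i hi)
        rw [epsTay]
        refine (norm_sub_le _ _).trans ?_
        have h3 : 0 ≤ 2 * K * δ * St.q ^ (-(r * (m : ℝ))) := by positivity
        rw [hL]
        linarith
    refine ⟨D', hCr, ?_⟩
    change CrNorm St r g D' ≤ ε
    unfold CrNorm
    refine max_le (Real.iSup_le (fun i => Real.iSup_le (fun x => ?_) hε.le) hε.le)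
      (Real.iSup_le (fun x => Real.iSup_le (fun y => ?_) hε.le) hε.le)
    · refine (hD3 x i.1 i.2).trans ?_
      rw [← hLδ]
      have h1 : 2 * K * δ ≤ L * δ := by
        refine mul_le_mul_of_nonneg_right ?_ hδ0.le
        nlinarith [mul_nonneg hn0 hK0]
      exact h1.trans (le_mul_of_one_le_right (by positivity) hqr)
    · by_cases hall : ∀ m : ℕ, St.ν y ≤ St.q⁻¹ ^ m
      · have h0 : ‖epsTay St ⌊r⌋₊ g D' x y‖ ≤ 0 := by
          refine le_of_forall_pos_le_add fun η hη => ?_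
          obtain ⟨M', hM'⟩ := hCr.2 η hη
          obtain ⟨z, hz⟩ := (St.mem_ball_iff y M').mpr (hall M')
          have h1 := hM' M' le_rfl x z
          rw [← hz] at h1
          rw [zero_add]
          refine le_trans (le_mul_of_one_le_right (norm_nonneg _) ?_) h1
          exact Real.one_le_rpow hq1.le (by positivity)
        rw [le_antisymm h0 (norm_nonneg _), zero_div]
        exact hε.le
      · push Not at hall
        have hfind := Nat.find_spec hall
        have hmin := fun m => Nat.find_min hall (m := m)
        generalize Nat.find hall = k at hfind hmin
        cases k with
        | zero =>
          exact absurd ((St.mem_ball_iff y 0).mp ⟨y, by simp⟩) (not_le.mpr hfind)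
        | succ m =>
          obtain ⟨z, hz⟩ := (St.mem_ball_iff y m).mpr (not_lt.mp (hmin m (Nat.lt_succ_self m)))
          have hE' := hE m x z
          rw [← hz] at hE'
          have hpos : 0 < St.q⁻¹ ^ (m + 1) := by positivity
          have hν : 0 < St.ν y := hpos.trans hfind
          rw [div_le_iff₀ (Real.rpow_pos_of_pos hν r)]
          have h1 : St.q ^ (-(r * ((m : ℝ) + 1))) ≤ St.ν y ^ r := by
            refine le_trans (le_of_eq ?_) (Real.rpow_le_rpow hpos.le hfind.le hr)
            rw [← Real.rpow_natCast, Real.inv_rpow hq.le, ← Real.rpow_neg hq.le,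
              ← Real.rpow_mul hq.le]
            congr 1
            push_cast
            ring
          refine hE'.trans (le_trans (le_of_eq ?_) (mul_le_mul_of_nonneg_left h1 hε.le))
          rw [← hLδ, mul_assoc (L * δ), ← Real.rpow_add hq]
          congr 2
          ring

end CrPaper
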